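/- For every n ∈ {3, 4, 5, 6, 8, 9} there exists a map P : ℤ/nℤ → (points of ℙ²(𝔽₄)) such that for all i, j ∈ ℤ/nℤ with j ≠ i and j ≠ i+1, the three points P(i), P(i+1), P(j) are not collinear. -/

import Mathlib

/-- The field with four elements. -/
abbrev F4 : Type := GaloisField 2 2

/-- The vector space `𝔽₄³`. -/
abbrev V3 : Type := Fin 3 → F4

/-- Points of `ℙ²(𝔽₄)`: 1-dimensional linear subspaces of `𝔽₄³`. -/
abbrev ProjPoint : Type := {P : Submodule F4 V3 // Module.finrank F4 P = 1}

/-- Three points of `ℙ²(𝔽₄)` (given as subspaces of `𝔽₄³`) are collinear if they are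
contained in a common 2-dimensional linear subspace of `𝔽₄³`. -/
def Collin3 (p q r : Submodule F4 V3) : Prop :=
  ∃ L : Submodule F4 V3, Module.finrank F4 L = 2 ∧ p ≤ L ∧ q ≤ L ∧ r ≤ L

abbrev KK : Type := Bool × Bool

def kadd (x y : KK) : KK := (xor x.1 y.1, xor x.2 y.2)

def kmul (x y : KK) : KK :=
  (xor (x.1 && y.1) (x.2 && y.2), xor (xor (x.1 && y.2) (x.2 && y.1)) (x.2 && y.2))

abbrev K0 : KK := (false, false)
abbrev K1 : KK := (true, false)
abbrev K2 : KK := (false, true)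
abbrev K3 : KK := (true, true)

def kdet (p q r : Fin 3 → KK) : KK :=
  kadd (kmul (p 0) (kadd (kmul (q 1) (r 2)) (kmul (q 2) (r 1))))
    (kadd (kmul (p 1) (kadd (kmul (q 0) (r 2)) (kmul (q 2) (r 0))))
      (kmul (p 2) (kadd (kmul (q 0) (r 1)) (kmul (q 1) (r 0)))))

theorem exists_w : ∃ w : F4, w ^ 2 = w + 1 := by
  classical
  have : Fintype F4 := Fintype.ofFinite _
  have hc : Fintype.card F4 = 4 := by
    rw [← Nat.card_eq_fintype_card, GaloisField.card 2 2 (by norm_num)]; norm_num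
  have h2 : (2 : F4) = 0 := CharTwo.two_eq_zero
  obtain ⟨w, hw⟩ : ∃ w : F4, w ∉ ({0, 1} : Finset F4) := by
    by_contra! h
    have h1 := Finset.card_le_card (fun x _ => h x : (Finset.univ : Finset F4) ⊆ {0, 1})
    rw [Finset.card_univ, hc] at h1
    have := Finset.card_le_two (a := (0 : F4)) (b := 1)
    omega
  simp only [Finset.mem_insert, Finset.mem_singleton, not_or] at hw
  have h4 := FiniteField.pow_card w
  rw [hc] at h4
  refine ⟨w, ?_⟩
  have h5 : w * ((w - 1) * (w ^ 2 + w + 1)) = 0 := by linear_combination h4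
  have h6 := (mul_eq_zero.1 ((mul_eq_zero.1 h5).resolve_left hw.1)).resolve_left
    (sub_ne_zero.2 hw.2)
  linear_combination h6 - (w + 1) * h2

noncomputable def ww : F4 := exists_w.choose

theorem ww_sq : ww ^ 2 = ww + 1 := exists_w.choose_spec

noncomputable def phi (x : KK) : F4 := (if x.1 then 1 else 0) + (if x.2 then ww else 0)

theorem phi_add (x y : KK) : phi (kadd x y) = phi x + phi y := by
  have h2 : (2 : F4) = 0 := CharTwo.two_eq_zero
  obtain ⟨a, b⟩ := x
  obtain ⟨c, d⟩ := y
  cases a <;> cases b <;> cases c <;> cases d <;> simp [phi, kadd] <;> grind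

theorem phi_mul (x y : KK) : phi (kmul x y) = phi x * phi y := by
  have h2 : (2 : F4) = 0 := CharTwo.two_eq_zero
  have hw := ww_sq
  obtain ⟨a, b⟩ := x
  obtain ⟨c, d⟩ := y
  cases a <;> cases b <;> cases c <;> cases d <;> simp [phi, kmul] <;> grind

theorem phi_ne (x : KK) (hx : x ≠ K0) : phi x ≠ 0 := by
  have hw := ww_sq
  have h2 : (2 : F4) = 0 := CharTwo.two_eq_zero
  have h1 : (1 : F4) ≠ 0 := one_ne_zero
  obtain ⟨a, b⟩ := x
  cases a <;> cases b <;> simp [phi] at hx ⊢ <;> grind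

noncomputable def vec (p : Fin 3 → KK) : V3 := fun i => phi (p i)

theorem det_vec (p q r : Fin 3 → KK) :
    Matrix.det (Matrix.of ![vec p, vec q, vec r] : Matrix (Fin 3) (Fin 3) F4) = phi (kdet p q r) := by
  have h2 : (2 : F4) = 0 := CharTwo.two_eq_zero
  rw [Matrix.det_fin_three]
  simp only [Matrix.of_apply, kdet, phi_add, phi_mul, vec, Matrix.cons_val_zero, Matrix.cons_val_one,
    Matrix.cons_val]
  grind

theorem not_collin (p q r : Fin 3 → KK) (h : kdet p q r ≠ K0) :
    ¬ Collin3 (Submodule.span F4 {vec p}) (Submodule.span F4 {vec q})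
      (Submodule.span F4 {vec r}) := by
  rintro ⟨L, hL, h1, h2, h3⟩
  have hd := phi_ne _ h
  rw [← det_vec] at hd
  have hli : LinearIndependent F4 (![vec p, vec q, vec r] : Fin 3 → V3) :=
    Matrix.linearIndependent_rows_of_det_ne_zero hd
  rw [Submodule.span_singleton_le_iff_mem] at h1 h2 h3
  have hm : ∀ i, (![vec p, vec q, vec r] : Fin 3 → V3) i ∈ L := by
    intro i
    fin_cases i <;> assumption
  have hle : Submodule.span F4 (Set.range (![vec p, vec q, vec r] : Fin 3 → V3)) ≤ L := by
    rw [Submodule.span_le]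
    rintro _ ⟨i, rfl⟩
    exact hm i
  have := Submodule.finrank_mono hle
  rw [finrank_span_eq_card hli, hL] at this
  simp at this

theorem vec_ne (p : Fin 3 → KK) (h : ∃ i, p i ≠ K0) : vec p ≠ 0 := by
  obtain ⟨i, hi⟩ := h
  exact fun h0 => phi_ne _ hi (congrFun h0 i)

theorem build (n : ℕ) (v : ZMod n → Fin 3 → KK) (h0 : ∀ i, ∃ k, v i k ≠ K0)
    (h : ∀ i j : ZMod n, j ≠ i → j ≠ i + 1 → kdet (v i) (v (i + 1)) (v j) ≠ K0) :
    ∃ P : ZMod n → ProjPoint,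
        ∀ i j : ZMod n, j ≠ i → j ≠ i + 1 →
          ¬ Collin3 (P i).1 (P (i + 1)).1 (P j).1 :=
  ⟨fun i => ⟨Submodule.span F4 {vec (v i)}, finrank_span_singleton (vec_ne _ (h0 i))⟩,
    fun i j h1 h2 => not_collin _ _ _ (h i j h1 h2)⟩

def c3 : Fin 3 → Fin 3 → KK := ![![K1, K0, K0], ![K0, K1, K0], ![K0, K0, K1]]
def c4 : Fin 4 → Fin 3 → KK := ![![K1, K0, K0], ![K0, K1, K0], ![K0, K0, K1], ![K1, K1, K1]]
def c5 : Fin 5 → Fin 3 → KK :=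
  ![![K1, K0, K0], ![K0, K1, K0], ![K0, K0, K1], ![K1, K1, K1], ![K1, K2, K3]]
def c6 : Fin 6 → Fin 3 → KK :=
  ![![K1, K0, K0], ![K0, K1, K0], ![K0, K0, K1], ![K1, K1, K1], ![K1, K0, K2], ![K1, K2, K1]]
def c8 : Fin 8 → Fin 3 → KK :=
  ![![K1, K0, K0], ![K0, K1, K0], ![K0, K0, K1], ![K1, K1, K1], ![K1, K0, K2], ![K1, K2, K1],
    ![K1, K0, K3], ![K1, K3, K1]]
def c9 : Fin 9 → Fin 3 → KK :=
  ![![K1, K0, K0], ![K0, K1, K0], ![K0, K0, K1], ![K1, K1, K1], ![K1, K0, K2], ![K1, K3, K1],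
    ![K1, K2, K2], ![K1, K0, K1], ![K1, K3, K2]]

/-- For every `n ∈ {3, 4, 5, 6, 8, 9}` there is a map `P : ℤ/nℤ → ℙ²(𝔽₄)` such that
`P i`, `P (i+1)`, `P j` are never collinear for `j ≠ i`, `j ≠ i + 1`. -/
theorem exists_no_collinear_triple :
    ∀ n ∈ ({3, 4, 5, 6, 8, 9} : Set ℕ),
      ∃ P : ZMod n → ProjPoint,
        ∀ i j : ZMod n, j ≠ i → j ≠ i + 1 →
          ¬ Collin3 (P i).1 (P (i + 1)).1 (P j).1 := by
  intro n hn
  simp only [Set.mem_insert_iff, Set.mem_singleton_iff] at hn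
  rcases hn with rfl | rfl | rfl | rfl | rfl | rfl
  · exact build 3 c3 (by decide +kernel : ∀ i : Fin 3, ∃ k, c3 i k ≠ K0)
      (by decide +kernel : ∀ i j : Fin 3, j ≠ i → j ≠ i + 1 → kdet (c3 i) (c3 (i + 1)) (c3 j) ≠ K0)
  · exact build 4 c4 (by decide +kernel : ∀ i : Fin 4, ∃ k, c4 i k ≠ K0)
      (by decide +kernel : ∀ i j : Fin 4, j ≠ i → j ≠ i + 1 → kdet (c4 i) (c4 (i + 1)) (c4 j) ≠ K0)
  · exact build 5 c5 (by decide +kernel : ∀ i : Fin 5, ∃ k, c5 i k ≠ K0)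
      (by decide +kernel : ∀ i j : Fin 5, j ≠ i → j ≠ i + 1 → kdet (c5 i) (c5 (i + 1)) (c5 j) ≠ K0)
  · exact build 6 c6 (by decide +kernel : ∀ i : Fin 6, ∃ k, c6 i k ≠ K0)
      (by decide +kernel : ∀ i j : Fin 6, j ≠ i → j ≠ i + 1 → kdet (c6 i) (c6 (i + 1)) (c6 j) ≠ K0)
  · exact build 8 c8 (by decide +kernel : ∀ i : Fin 8, ∃ k, c8 i k ≠ K0)
      (by decide +kernel : ∀ i j : Fin 8, j ≠ i → j ≠ i + 1 → kdet (c8 i) (c8 (i + 1)) (c8 j) ≠ K0)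
  · exact build 9 c9 (by decide +kernel : ∀ i : Fin 9, ∃ k, c9 i k ≠ K0)
      (by decide +kernel : ∀ i j : Fin 9, j ≠ i → j ≠ i + 1 → kdet (c9 i) (c9 (i + 1)) (c9 j) ≠ K0)
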